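/- Consider the two-setting two-outcome qubit assemblage σ_{1|1} = 0.3 • |0⟩⟨0|, σ_{2|1} = 0.2 • |0⟩⟨0| + 0.5 • |1⟩⟨1|, σ_{1|2} = 0.3 • |+⟩⟨+|, σ_{2|2} = 0.2 • |+⟩⟨+| + 0.5 • |−⟩⟨−|. For every pair of two-outcome POVMs {E_{1|x}, E_{2|x}} (x ∈ {1,2}) on ℂ², the CHSH value S = ⟨1,1⟩ + ⟨1,2⟩ + ⟨2,1⟩ − ⟨2,2⟩ satisfies S ≤ 2, where ⟨x,y⟩ = ∑_{a,b ∈ {1,2}} (−1)^{a+b} Re tr(E_{a|x} * σ_{b|y}). -/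

import Mathlib

open scoped BigOperators Matrix ComplexOrder Kronecker ComplexConjugate

/-- A POVM on `ℂ^d` with outcome set `B`: positive semidefinite effects summing to `1`. -/
def IsPOVM {d : ℕ} {B : Type} [Fintype B] (E : B → Matrix (Fin d) (Fin d) ℂ) : Prop :=
  (∀ b, (E b).PosSemidef) ∧ ∑ b, E b = 1

/-- A family of POVMs `E b y` (outcome `b`, setting `y`) on `ℂ^d` is jointly measurable
if it arises from a single POVM `G` by classical post-processing. -/
def JointlyMeasurable {d : ℕ} {B Y : Type} [Fintype B] [Fintype Y]
    (E : B → Y → Matrix (Fin d) (Fin d) ℂ) : Prop :=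
  ∃ (n : ℕ) (G : Fin n → Matrix (Fin d) (Fin d) ℂ) (p : B → Y → Fin n → ℝ),
    IsPOVM G ∧ (∀ b y l, 0 ≤ p b y l) ∧ (∀ y l, ∑ b, p b y l = 1) ∧
    (∀ b y, E b y = ∑ l, p b y l • G l)

/-- An assemblage `σ b y` on `ℂ^d` is unsteerable if it admits a local-hidden-state model. -/
def Unsteerable {d : ℕ} {B Y : Type} [Fintype B] [Fintype Y]
    (σ : B → Y → Matrix (Fin d) (Fin d) ℂ) : Prop :=
  ∃ (n : ℕ) (τ : Fin n → Matrix (Fin d) (Fin d) ℂ) (p : B → Y → Fin n → ℝ),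
    (∀ l, (τ l).PosSemidef) ∧ (∑ l, (τ l).trace = 1) ∧
    (∀ b y l, 0 ≤ p b y l) ∧ (∀ y l, ∑ b, p b y l = 1) ∧
    (∀ b y, σ b y = ∑ l, p b y l • τ l)

/-- `|0⟩`. -/
noncomputable def ket0 : Fin 2 → ℂ := ![1, 0]
/-- `|1⟩`. -/
noncomputable def ket1 : Fin 2 → ℂ := ![0, 1]
/-- `|+⟩ = (|0⟩ + |1⟩)/√2`. -/
noncomputable def ketP : Fin 2 → ℂ := ![(Real.sqrt 2 : ℂ)⁻¹, (Real.sqrt 2 : ℂ)⁻¹]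
/-- `|−⟩ = (|0⟩ − |1⟩)/√2`. -/
noncomputable def ketM : Fin 2 → ℂ := ![(Real.sqrt 2 : ℂ)⁻¹, -(Real.sqrt 2 : ℂ)⁻¹]

/-- `|ψ⟩⟨ψ|`. -/
noncomputable def proj (ψ : Fin 2 → ℂ) : Matrix (Fin 2) (Fin 2) ℂ :=
  Matrix.vecMulVec ψ (star ψ)

/-- The explicit two-setting two-outcome qubit assemblage
`σ_{1|1} = 0.3|0⟩⟨0|`, `σ_{2|1} = 0.2|0⟩⟨0| + 0.5|1⟩⟨1|`,
`σ_{1|2} = 0.3|+⟩⟨+|`, `σ_{2|2} = 0.2|+⟩⟨+| + 0.5|−⟩⟨−|`,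
with outcome `b : Fin 2` (0 ↦ 1, 1 ↦ 2) and setting `y : Fin 2` (0 ↦ 1, 1 ↦ 2). -/
noncomputable def exampleAssemblage : Fin 2 → Fin 2 → Matrix (Fin 2) (Fin 2) ℂ :=
  fun b y =>
    if y = 0 then
      if b = 0 then (0.3 : ℝ) • proj ket0
      else (0.2 : ℝ) • proj ket0 + (0.5 : ℝ) • proj ket1
    else
      if b = 0 then (0.3 : ℝ) • proj ketP
      else (0.2 : ℝ) • proj ketP + (0.5 : ℝ) • proj ketM

/-- The correlator `⟨x,y⟩ = ∑_{a,b} (-1)^(a+b) Re tr(E_{a|x} σ_{b|y})` for the explicit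
assemblage, with `a b : Fin 2` standing for outcomes `1, 2`. -/
noncomputable def chshCorr (E : Fin 2 → Fin 2 → Matrix (Fin 2) (Fin 2) ℂ)
    (x y : Fin 2) : ℝ :=
  ∑ a : Fin 2, ∑ b : Fin 2,
    (-1 : ℝ) ^ ((a : ℕ) + (b : ℕ)) * ((E a x * exampleAssemblage b y).trace).re

/-- Positivity of the real part of the quadratic form on a real vector. -/
theorem posSemidef_real_form (M : Matrix (Fin 2) (Fin 2) ℂ) (h : M.PosSemidef) (a b : ℝ) :
    0 ≤ a ^ 2 * (M 0 0).re + a * b * ((M 0 1).re + (M 1 0).re) + b ^ 2 * (M 1 1).re := by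
  have h1 := h.dotProduct_mulVec_nonneg ![(a : ℂ), (b : ℂ)]
  have h2 := (Complex.le_def.1 h1).1
  simp [Matrix.mulVec, dotProduct, Fin.sum_univ_two] at h2
  nlinarith [h2]

theorem proj_ketP : proj ketP = !![(1/2 : ℂ), 1/2; 1/2, 1/2] := by
  have h : ((Real.sqrt 2 : ℝ) : ℂ)⁻¹ * ((Real.sqrt 2 : ℝ) : ℂ)⁻¹ = 1/2 := by
    rw [← mul_inv, ← Complex.ofReal_mul, Real.mul_self_sqrt (by norm_num)]; norm_num
  ext i j
  fin_cases i <;> fin_cases j <;> simp [proj, ketP, Matrix.vecMulVec_apply] <;> simpa using h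

theorem proj_ketM : proj ketM = !![(1/2 : ℂ), -(1/2); -(1/2), 1/2] := by
  have h : ((Real.sqrt 2 : ℝ) : ℂ)⁻¹ * ((Real.sqrt 2 : ℝ) : ℂ)⁻¹ = 1/2 := by
    rw [← mul_inv, ← Complex.ofReal_mul, Real.mul_self_sqrt (by norm_num)]; norm_num
  ext i j
  fin_cases i <;> fin_cases j <;> simp [proj, ketM, Matrix.vecMulVec_apply] <;> simpa using h

theorem proj_ket0 : proj ket0 = !![(1 : ℂ), 0; 0, 0] := by
  ext i j
  fin_cases i <;> fin_cases j <;> simp [proj, ket0, Matrix.vecMulVec_apply]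

theorem proj_ket1 : proj ket1 = !![(0 : ℂ), 0; 0, 1] := by
  ext i j
  fin_cases i <;> fin_cases j <;> simp [proj, ket1, Matrix.vecMulVec_apply]

/-- no pair of qubit POVMs `E_{a|x}` gives a CHSH violation with the
explicit assemblage: `⟨1,1⟩ + ⟨1,2⟩ + ⟨2,1⟩ − ⟨2,2⟩ ≤ 2`. -/
theorem exampleAssemblage_no_CHSH_violation
    (E : Fin 2 → Fin 2 → Matrix (Fin 2) (Fin 2) ℂ)
    (hE : ∀ x, IsPOVM fun a => E a x) :
    chshCorr E 0 0 + chshCorr E 0 1 + chshCorr E 1 0 - chshCorr E 1 1 ≤ 2 := by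
  have hp : ∀ a x, (E a x).PosSemidef := fun a x => (hE x).1 a
  have hs : ∀ x i j, (E 0 x i j).re + (E 1 x i j).re = ((1 : Matrix (Fin 2) (Fin 2) ℂ) i j).re := by
    intro x i j
    have := (hE x).2
    rw [← this, Fin.sum_univ_two]; simp
  have q := fun a x => posSemidef_real_form _ (hp a x)
  have s000 := hs 0 0 0
  have s001 := hs 0 0 1
  have s010 := hs 0 1 0
  have s011 := hs 0 1 1
  have s100 := hs 1 0 0
  have s101 := hs 1 0 1
  have s110 := hs 1 1 0
  have s111 := hs 1 1 1
  simp at s000 s001 s010 s011 s100 s101 s110 s111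
  have a1 := q 0 0 5 (-12)
  have a2 := q 1 0 12 5
  have a3 := q 0 0 12 5
  have a4 := q 1 0 5 (-12)
  have b1 := q 0 1 5 12
  have b2 := q 1 1 12 (-5)
  have b3 := q 0 1 12 (-5)
  have b4 := q 1 1 5 12
  simp [chshCorr, exampleAssemblage, Fin.sum_univ_two, proj_ketP, proj_ketM, proj_ket0, proj_ket1,
    Matrix.trace, Matrix.mul_apply]
  norm_num at a1 a2 a3 a4 b1 b2 b3 b4 ⊢
  linarith [q 0 0 1 0, q 0 0 0 1, q 1 0 1 0, q 1 0 0 1, q 0 1 1 0, q 0 1 0 1, q 1 1 1 0, q 1 1 0 1]
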